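/- arXiv:2101.10128 — 6 statements merged into one kernel-verified Lean document; each statement's English description precedes it below -/
import Mathlib

section
/- Under the decoy-state assumptions, the following identity holds: ν₁·Q(ν₂)·e^{ν₂} − ν₂·Q(ν₁)·e^{ν₁} = (ν₁ − ν₂)·Y(0) − ν₁ν₂·Σ_{i=2}^∞ (ν₁^{i−1} − ν₂^{i−1})·Y(i)/i!. -/
/-- The gain for intensity `m` with yields `Y`: Poisson average of the yields. -/
noncomputable def decoyGain (Y : ℕ → ℝ) (m : ℝ) : ℝ :=
  ∑' i : ℕ, Real.exp (-m) * m ^ i / (Nat.factorial i) * Y i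

theorem decoy_aux_summable (Y : ℕ → ℝ) (hY : ∀ i, 0 ≤ Y i ∧ Y i ≤ 1) (m : ℝ) (hm : 0 ≤ m) :
    Summable (fun i : ℕ => m ^ i / (Nat.factorial i) * Y i) := by
  refine Summable.of_nonneg_of_le (fun i => ?_) (fun i => ?_) (Real.summable_pow_div_factorial m)
  · exact mul_nonneg (by positivity) (hY i).1
  · exact mul_le_of_le_one_right (by positivity) (hY i).2

theorem decoy_aux_gain (Y : ℕ → ℝ) (hY : ∀ i, 0 ≤ Y i ∧ Y i ≤ 1) (m : ℝ) (hm : 0 ≤ m) :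
    decoyGain Y m * Real.exp m
      = Y 0 + m * Y 1 + ∑' i : ℕ, m ^ (i + 2) / (Nat.factorial (i + 2)) * Y (i + 2) := by
  have h1 : decoyGain Y m = Real.exp (-m) * ∑' i : ℕ, m ^ i / (Nat.factorial i) * Y i := by
    unfold decoyGain
    rw [← tsum_mul_left]
    exact tsum_congr (fun i => by ring)
  have h2 := (decoy_aux_summable Y hY m hm).sum_add_tsum_nat_add 2
  have h3 : Real.exp (-m) * Real.exp m = 1 := by rw [← Real.exp_add]; simp
  simp only [Finset.sum_range_succ, Finset.sum_range_zero] at h2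
  rw [h1, mul_right_comm, h3, one_mul, ← h2]
  simp

theorem decoy_vacuum_identity (Y : ℕ → ℝ) (hY : ∀ i, 0 ≤ Y i ∧ Y i ≤ 1)
    (μ ν₁ ν₂ : ℝ) (hν₂ : 0 ≤ ν₂) (hν : ν₂ < ν₁) (hμ : ν₁ + ν₂ < μ) :
    ν₁ * decoyGain Y ν₂ * Real.exp ν₂ - ν₂ * decoyGain Y ν₁ * Real.exp ν₁
      = (ν₁ - ν₂) * Y 0
        - ν₁ * ν₂ *
          ∑' i : ℕ, (ν₁ ^ (i + 1) - ν₂ ^ (i + 1)) * Y (i + 2) / (Nat.factorial (i + 2)) := by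
  have g1 := decoy_aux_gain Y hY ν₁ (hν₂.trans hν.le)
  have g2 := decoy_aux_gain Y hY ν₂ hν₂
  have s1 := (summable_nat_add_iff 2).2 (decoy_aux_summable Y hY ν₁ (hν₂.trans hν.le))
  have s2 := (summable_nat_add_iff 2).2 (decoy_aux_summable Y hY ν₂ hν₂)
  have key : ν₁ * ν₂ *
      ∑' i : ℕ, (ν₁ ^ (i + 1) - ν₂ ^ (i + 1)) * Y (i + 2) / (Nat.factorial (i + 2))
      = ν₂ * (∑' i : ℕ, ν₁ ^ (i + 2) / (Nat.factorial (i + 2)) * Y (i + 2))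
        - ν₁ * ∑' i : ℕ, ν₂ ^ (i + 2) / (Nat.factorial (i + 2)) * Y (i + 2) := by
    rw [← tsum_mul_left, ← tsum_mul_left, ← tsum_mul_left,
      ← (s1.mul_left ν₂).tsum_sub (s2.mul_left ν₁)]
    exact tsum_congr (fun i => by ring)
  rw [key, mul_assoc, mul_assoc, g1, g2]
  ring
end

section
/- Under the decoy-state assumptions, the vacuum yield satisfies the lower bound Y(0) ≥ Y₀^L, where Y₀^L = max{ (ν₁·Q(ν₂)·e^{ν₂} − ν₂·Q(ν₁)·e^{ν₁}) / (ν₁ − ν₂), 0 }. -/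
theorem decoyGain_exp_split (Y : ℕ → ℝ) (hY : ∀ i, 0 ≤ Y i ∧ Y i ≤ 1) (m : ℝ) :
    Summable (fun i : ℕ => m ^ (i + 1) / (Nat.factorial (i + 1)) * Y (i + 1)) ∧
    decoyGain Y m * Real.exp m =
      Y 0 + ∑' i : ℕ, m ^ (i + 1) / (Nat.factorial (i + 1)) * Y (i + 1) := by
  have hs : Summable (fun i : ℕ => m ^ i / (Nat.factorial i) * Y i) := by
    refine Summable.of_norm_bounded (Real.summable_pow_div_factorial m).norm (fun i => ?_)
    rw [norm_mul]
    refine mul_le_of_le_one_right (norm_nonneg _) ?_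
    rw [Real.norm_eq_abs, abs_of_nonneg (hY i).1]
    exact (hY i).2
  refine ⟨(summable_nat_add_iff 1).2 hs, ?_⟩
  have h0 := hs.tsum_eq_zero_add
  simp only [pow_zero, Nat.factorial_zero, Nat.cast_one, div_one, one_mul] at h0
  rw [← h0, decoyGain, ← tsum_mul_right]
  refine tsum_congr (fun i => ?_)
  have he : Real.exp (-m) * Real.exp m = 1 := by rw [← Real.exp_add]; simp
  calc _ = (Real.exp (-m) * Real.exp m) * (m ^ i / (Nat.factorial i) * Y i) := by ring
    _ = _ := by rw [he, one_mul]

theorem vacuum_yield_lower_bound (Y : ℕ → ℝ) (hY : ∀ i, 0 ≤ Y i ∧ Y i ≤ 1)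
    (μ ν₁ ν₂ : ℝ) (hν₂ : 0 ≤ ν₂) (hν : ν₂ < ν₁) (hμ : ν₁ + ν₂ < μ) :
    Y 0 ≥
      max ((ν₁ * decoyGain Y ν₂ * Real.exp ν₂ - ν₂ * decoyGain Y ν₁ * Real.exp ν₁)
            / (ν₁ - ν₂)) 0 := by
  have key := fun m : ℝ => decoyGain_exp_split Y hY m
  rw [ge_iff_le, max_le_iff]
  refine ⟨?_, (hY 0).1⟩
  rw [div_le_iff₀ (by linarith)]
  have h1 := key ν₁
  have h2 := key ν₂
  have hle : ν₁ * ∑' i : ℕ, ν₂ ^ (i + 1) / (Nat.factorial (i + 1)) * Y (i + 1)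
      ≤ ν₂ * ∑' i : ℕ, ν₁ ^ (i + 1) / (Nat.factorial (i + 1)) * Y (i + 1) := by
    rw [← tsum_mul_left, ← tsum_mul_left]
    refine Summable.tsum_le_tsum (fun i => ?_) (h2.1.mul_left _) (h1.1.mul_left _)
    have hp : ν₂ ^ i ≤ ν₁ ^ i := pow_le_pow_left₀ hν₂ hν.le i
    have hc : 0 ≤ ν₁ * ν₂ / (Nat.factorial (i + 1)) * Y (i + 1) := by
      have := (hY (i + 1)).1
      have : 0 ≤ ν₁ := by linarith
      positivity
    calc _ = (ν₁ * ν₂ / (Nat.factorial (i + 1)) * Y (i + 1)) * ν₂ ^ i := by ring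
      _ ≤ (ν₁ * ν₂ / (Nat.factorial (i + 1)) * Y (i + 1)) * ν₁ ^ i :=
        mul_le_mul_of_nonneg_left hp hc
      _ = _ := by ring
  rw [mul_assoc, mul_assoc, h1.2, h2.2]
  linarith
end

section
/- Under the decoy-state assumptions with error rates, the following hold: EQ(ν₁)·e^{ν₁} − EQ(ν₂)·e^{ν₂} = e(1)·(ν₁ − ν₂)·Y(1) + Σ_{i=2}^∞ e(i)·(ν₁^i − ν₂^i)·Y(i)/i!, and consequently EQ(ν₁)·e^{ν₁} − EQ(ν₂)·e^{ν₂} ≥ e(1)·(ν₁ − ν₂)·Y(1). -/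
/-- The error-weighted gain for intensity `m` with yields `Y` and error rates `e`. -/
noncomputable def decoyErrGain (Y e : ℕ → ℝ) (m : ℝ) : ℝ :=
  ∑' i : ℕ, Real.exp (-m) * m ^ i / (Nat.factorial i) * (e i * Y i)

theorem error_gain_identity_and_bound (Y e : ℕ → ℝ)
    (hY : ∀ i, 0 ≤ Y i ∧ Y i ≤ 1) (he : ∀ i, 0 ≤ e i ∧ e i ≤ 1)
    (μ ν₁ ν₂ : ℝ) (hν₂ : 0 ≤ ν₂) (hν : ν₂ < ν₁) (hμ : ν₁ + ν₂ < μ) :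
    (decoyErrGain Y e ν₁ * Real.exp ν₁ - decoyErrGain Y e ν₂ * Real.exp ν₂
        = e 1 * ((ν₁ - ν₂) * Y 1)
          + ∑' i : ℕ, e (i + 2) * (ν₁ ^ (i + 2) - ν₂ ^ (i + 2)) * Y (i + 2)
              / (Nat.factorial (i + 2))) ∧
      decoyErrGain Y e ν₁ * Real.exp ν₁ - decoyErrGain Y e ν₂ * Real.exp ν₂
        ≥ e 1 * ((ν₁ - ν₂) * Y 1) := by
  have hs : ∀ m : ℝ, 0 ≤ m → Summable (fun i : ℕ => m ^ i / (Nat.factorial i) * (e i * Y i)) := by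
    intro m hm
    refine Summable.of_nonneg_of_le (fun i => ?_) (fun i => ?_) (Real.summable_pow_div_factorial m)
    · exact mul_nonneg (by positivity) (mul_nonneg (he i).1 (hY i).1)
    · exact mul_le_of_le_one_right (by positivity)
        (mul_le_one₀ (he i).2 (hY i).1 (hY i).2)
  have hg : ∀ m : ℝ, decoyErrGain Y e m * Real.exp m
      = ∑' i : ℕ, m ^ i / (Nat.factorial i) * (e i * Y i) := by
    intro m
    unfold decoyErrGain
    rw [← tsum_mul_right]
    refine tsum_congr (fun i => ?_)
    have h : Real.exp (-m) * Real.exp m = 1 := by rw [← Real.exp_add]; simp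
    calc _ = (Real.exp (-m) * Real.exp m) * (m ^ i / (Nat.factorial i) * (e i * Y i)) := by ring
      _ = _ := by rw [h, one_mul]
  have h1 := hs ν₁ (hν₂.trans hν.le)
  have h2 := hs ν₂ hν₂
  have key : decoyErrGain Y e ν₁ * Real.exp ν₁ - decoyErrGain Y e ν₂ * Real.exp ν₂
        = e 1 * ((ν₁ - ν₂) * Y 1)
          + ∑' i : ℕ, e (i + 2) * (ν₁ ^ (i + 2) - ν₂ ^ (i + 2)) * Y (i + 2)
              / (Nat.factorial (i + 2)) := by
    rw [hg, hg, ← h1.tsum_sub h2, ← (h1.sub h2).sum_add_tsum_nat_add 2]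
    congr 1
    · simp [Finset.sum_range_succ]
      ring
    · exact tsum_congr (fun i => by ring)
  refine ⟨key, ?_⟩
  rw [key]
  refine le_add_of_nonneg_right (tsum_nonneg (fun i => ?_))
  have hp : ν₂ ^ (i + 2) ≤ ν₁ ^ (i + 2) := pow_le_pow_left₀ hν₂ hν.le _
  exact div_nonneg (mul_nonneg (mul_nonneg (he _).1 (sub_nonneg.2 hp)) (hY _).1) (by positivity)
end

section
/- Under the decoy-state assumptions with error rates, if L is a real number with 0 < L ≤ Y(1), then the single-photon error rate satisfies e(1) ≤ (EQ(ν₁)·e^{ν₁} − EQ(ν₂)·e^{ν₂}) / ((ν₁ − ν₂)·L). -/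
theorem single_photon_error_upper_bound (Y e : ℕ → ℝ)
    (hY : ∀ i, 0 ≤ Y i ∧ Y i ≤ 1) (he : ∀ i, 0 ≤ e i ∧ e i ≤ 1)
    (μ ν₁ ν₂ : ℝ) (hν₂ : 0 ≤ ν₂) (hν : ν₂ < ν₁) (hμ : ν₁ + ν₂ < μ)
    (L : ℝ) (hL : 0 < L) (hLY : L ≤ Y 1) :
    e 1 ≤ (decoyErrGain Y e ν₁ * Real.exp ν₁ - decoyErrGain Y e ν₂ * Real.exp ν₂)
            / ((ν₁ - ν₂) * L) := by
  have hs : ∀ m : ℝ, 0 ≤ m → Summable (fun i : ℕ => m ^ i / (Nat.factorial i) * (e i * Y i)) := by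
    intro m hm
    refine Summable.of_nonneg_of_le (fun i => ?_) (fun i => ?_) (Real.summable_pow_div_factorial m)
    · have := (hY i).1
      have := (he i).1
      positivity
    · have h1 : e i * Y i ≤ 1 := mul_le_one₀ (he i).2 (hY i).1 (hY i).2
      have h2 : 0 ≤ m ^ i / (Nat.factorial i : ℝ) := by positivity
      exact mul_le_of_le_one_right h2 h1
  have hE : ∀ m : ℝ, decoyErrGain Y e m * Real.exp m
      = ∑' i : ℕ, m ^ i / (Nat.factorial i) * (e i * Y i) := by
    intro m
    unfold decoyErrGain
    rw [← tsum_mul_right]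
    refine tsum_congr (fun i => ?_)
    have h : Real.exp (-m) * Real.exp m = 1 := by rw [← Real.exp_add]; simp
    linear_combination (m ^ i / (Nat.factorial i) * (e i * Y i)) * h
  have hν₁ : 0 ≤ ν₁ := hν₂.trans hν.le
  rw [hE, hE, ← (hs ν₁ hν₁).tsum_sub (hs ν₂ hν₂),
    le_div_iff₀ (mul_pos (sub_pos.2 hν) hL)]
  have key := ((hs ν₁ hν₁).sub (hs ν₂ hν₂)).le_tsum 1 (fun j _ => by
    have h1 : ν₂ ^ j / (Nat.factorial j : ℝ) ≤ ν₁ ^ j / (Nat.factorial j : ℝ) := by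
      gcongr
    exact sub_nonneg.2 (mul_le_mul_of_nonneg_right h1 (mul_nonneg (he j).1 (hY j).1)))
  refine le_trans ?_ key
  have h3 : e 1 * (ν₁ - ν₂) * L ≤ e 1 * (ν₁ - ν₂) * Y 1 :=
    mul_le_mul_of_nonneg_left hLY (mul_nonneg (he 1).1 (sub_pos.2 hν).le)
  simp only [pow_one, Nat.factorial_one, Nat.cast_one, div_one]
  linarith
end

section
/- Let μ, t be reals with 0 < μ ≤ 1 and 0 < t ≤ 1, and let p_d ≥ 0. Define Q^μ = p_d + 1 − e^{-μt} and Q₁^μ = μ·e^{-μ}·(p_d + t). Then Q₁^μ / Q^μ < e^{-(1−t)μ}. -/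
theorem single_photon_fraction_lt_bs (μ t p_d : ℝ) (hμ0 : 0 < μ) (hμ1 : μ ≤ 1)
    (ht0 : 0 < t) (ht1 : t ≤ 1) (hpd : 0 ≤ p_d) :
    (μ * Real.exp (-μ) * (p_d + t)) / (p_d + 1 - Real.exp (-(μ * t)))
      < Real.exp (-(1 - t) * μ) := by
  have hx : 0 < μ * t := mul_pos hμ0 ht0
  have h1 : μ * t + 1 < Real.exp (μ * t) := Real.add_one_lt_exp hx.ne'
  have h2 : Real.exp (-(μ * t)) < 1 := by
    rw [Real.exp_lt_one_iff]; linarith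
  have h3 : Real.exp (-(1 - t) * μ) = Real.exp (-μ) * Real.exp (μ * t) := by
    rw [← Real.exp_add]; congr 1; ring
  have h4 : Real.exp (μ * t) * Real.exp (-(μ * t)) = 1 := by
    rw [← Real.exp_add]; simp
  rw [div_lt_iff₀ (by linarith), h3]
  have key : μ * (p_d + t) < Real.exp (μ * t) * (p_d + 1 - Real.exp (-(μ * t))) := by
    have h5 : Real.exp (μ * t) * (p_d + 1 - Real.exp (-(μ * t)))
        = Real.exp (μ * t) * p_d + Real.exp (μ * t) - 1 := by
      linear_combination -h4
    have h6 : 1 * p_d ≤ Real.exp (μ * t) * p_d :=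
      mul_le_mul_of_nonneg_right (by linarith) hpd
    have h7 : μ * p_d ≤ 1 * p_d := mul_le_mul_of_nonneg_right hμ1 hpd
    rw [h5]; linarith
  have := mul_lt_mul_of_pos_left key (Real.exp_pos (-μ))
  linarith
end

section
/- Let μ, t be reals with 0 < μ ≤ 1 and 0 < t ≤ 1, let p_d ≥ 0, and let e₁, E be reals in [0, 1]. Define Q^μ = p_d + 1 − e^{-μt}, Q₁^μ = μ·e^{-μ}·(p_d + t), the key rate under the photon-number splitting attack R = (Q₁^μ/Q^μ)·(1 − h(e₁)) − h(E), and the key rate under the beam splitting attack R_BS = e^{-(1−t)μ} − h(E), where h(x) = −x·log₂ x − (1−x)·log₂(1−x) is the binary entropy (with h(0) = h(1) = 0). Then R < R_BS. -/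
/-- The binary entropy function `h(x) = -x log₂ x - (1-x) log₂ (1-x)`
(with the convention `h 0 = h 1 = 0`, which holds since `Real.logb 2 0 = 0`). -/
noncomputable def binEnt (x : ℝ) : ℝ :=
  -x * Real.logb 2 x - (1 - x) * Real.logb 2 (1 - x)

theorem pns_rate_lt_bs_rate (μ t p_d e₁ E : ℝ) (hμ0 : 0 < μ) (hμ1 : μ ≤ 1)
    (ht0 : 0 < t) (ht1 : t ≤ 1) (hpd : 0 ≤ p_d)
    (he₁0 : 0 ≤ e₁) (he₁1 : e₁ ≤ 1) (hE0 : 0 ≤ E) (hE1 : E ≤ 1) :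
    (μ * Real.exp (-μ) * (p_d + t)) / (p_d + 1 - Real.exp (-(μ * t)))
        * (1 - binEnt e₁) - binEnt E
      < Real.exp (-(1 - t) * μ) - binEnt E := by
  have hent : 0 ≤ binEnt e₁ := by
    unfold binEnt
    have h1 : Real.logb 2 e₁ ≤ 0 := Real.logb_nonpos (by norm_num) he₁0 he₁1
    have h2 : Real.logb 2 (1 - e₁) ≤ 0 :=
      Real.logb_nonpos (by norm_num) (by linarith) (by linarith)
    nlinarith [mul_nonneg he₁0 (neg_nonneg.2 h1),
      mul_nonneg (sub_nonneg.2 he₁1) (neg_nonneg.2 h2)]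
  have hx : 0 < μ * t := mul_pos hμ0 ht0
  have hexp : μ * t + 1 < Real.exp (μ * t) := Real.add_one_lt_exp hx.ne'
  have hlt : Real.exp (-(μ * t)) < 1 := by
    rw [Real.exp_lt_one_iff]; linarith
  have hQ : 0 < p_d + 1 - Real.exp (-(μ * t)) := by linarith
  have hm : 0 < Real.exp (-μ) := Real.exp_pos _
  have hsplit : Real.exp (-(1 - t) * μ) = Real.exp (-μ) * Real.exp (μ * t) := by
    rw [← Real.exp_add]; congr 1; ring
  have hinv : Real.exp (μ * t) * Real.exp (-(μ * t)) = 1 := by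
    rw [← Real.exp_add]; simp
  have hratio : (μ * Real.exp (-μ) * (p_d + t)) / (p_d + 1 - Real.exp (-(μ * t)))
      < Real.exp (-(1 - t) * μ) := by
    rw [div_lt_iff₀ hQ, hsplit]
    have h3 : μ * (p_d + t) < Real.exp (μ * t) * (p_d + 1 - Real.exp (-(μ * t))) := by
      have h4 : μ * p_d ≤ Real.exp (μ * t) * p_d :=
        mul_le_mul_of_nonneg_right (by linarith) hpd
      linarith [mul_add μ p_d t, mul_sub (Real.exp (μ * t)) (p_d + 1) (Real.exp (-(μ * t))),
        mul_add (Real.exp (μ * t)) p_d 1]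
    have h5 := mul_lt_mul_of_pos_left h3 hm
    linarith
  have hnn : 0 ≤ (μ * Real.exp (-μ) * (p_d + t)) / (p_d + 1 - Real.exp (-(μ * t))) := by
    apply div_nonneg _ hQ.le
    positivity
  have h6 := mul_nonneg hnn hent
  linarith [mul_sub ((μ * Real.exp (-μ) * (p_d + t)) / (p_d + 1 - Real.exp (-(μ * t)))) 1
    (binEnt e₁)]
end
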